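/- (Mountain-pass geometry.) Assume N ≥ 2, 0 < α < N and p > (N+α)/N. Then: (i) there exist θ > 0 and ρ > 0 such that J_λ(u) ≥ θ for every u ∈ E_λ with ‖u‖_{E_λ} = ρ; and (ii) for this ρ there exists w ∈ E_λ with ‖w‖_{E_λ} > ρ and J_λ(w) < 0. -/

import Mathlib

open scoped BigOperators ENNReal
open Filter

noncomputable section

namespace Choquard

variable {G : Type*}

/-- The word metric on a group with generating set `S`. -/
def wordDist [Group G] (S : Finset G) (x y : G) : ℕ :=
  sInf {k : ℕ | ∃ l : List G, (∀ g ∈ l, g ∈ S) ∧ l.length = k ∧ x⁻¹ * y = l.prod}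

/-- The closed ball of radius `r` about `c` in the word metric. -/
def ball [Group G] (S : Finset G) (c : G) (r : ℝ) : Set G :=
  {x | (wordDist S x c : ℝ) ≤ r}

/-- Polynomial growth of homogeneous dimension `N`. -/
def PolyGrowth [Group G] (S : Finset G) (N : ℕ) : Prop :=
  ∃ C₁ C₂ : ℝ, 0 < C₁ ∧ 0 < C₂ ∧ ∀ r : ℝ, 1 ≤ r →
    C₁ * r ^ N ≤ ((ball S (1 : G) r).ncard : ℝ) ∧
    ((ball S (1 : G) r).ncard : ℝ) ≤ C₂ * r ^ N

/-- Riesz-type asymptotics for the kernel `R`. -/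
def RieszKernel [Group G] (S : Finset G) (N : ℕ) (α : ℝ) (R : G → G → ℝ) : Prop :=
  (∀ x y, 0 < R x y) ∧
  ∃ c₁ c₂ : ℝ, 0 < c₁ ∧ 0 < c₂ ∧ ∀ x y : G, x ≠ y →
    c₁ * (wordDist S x y : ℝ) ^ (α - (N : ℝ)) ≤ R x y ∧
    R x y ≤ c₂ * (wordDist S x y : ℝ) ^ (α - (N : ℝ))

/-- Convolution `(R ∗ f)(x) = Σ_{y ≠ x} R x y f y`. -/
def conv [DecidableEq G] (R : G → G → ℝ) (f : G → ℝ) (x : G) : ℝ :=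
  ∑' y, if y = x then 0 else R x y * f y

/-- The convolution as an extended-nonnegative-real valued sum. -/
def convE [DecidableEq G] (R : G → G → ℝ) (f : G → ℝ) (x : G) : ℝ≥0∞ :=
  ∑' y, if y = x then 0 else ENNReal.ofReal (R x y * f y)

/-- Membership in `ℓ^q(G)`. -/
def Memlp (q : ℝ) (u : G → ℝ) : Prop := Summable fun x => |u x| ^ q

/-- The `ℓ^q` norm. -/
def lpNorm (q : ℝ) (u : G → ℝ) : ℝ := (∑' x, |u x| ^ q) ^ (1 / q)

/-- The `ℓ^∞` norm. -/
def supNorm (u : G → ℝ) : ℝ := ⨆ x, |u x|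

/-- The graph Laplacian `Δu(x) = Σ_{s ∈ S} (u(xs) - u(x))`. -/
def lap [Group G] (S : Finset G) (u : G → ℝ) (x : G) : ℝ :=
  ∑ s ∈ S, (u (x * s) - u x)

/-- The gradient form `∇u∇v(x) = (1/2) Σ_{s ∈ S} (u(xs)-u(x))(v(xs)-v(x))`. -/
def grad [Group G] (S : Finset G) (u v : G → ℝ) (x : G) : ℝ :=
  (1 / 2) * ∑ s ∈ S, (u (x * s) - u x) * (v (x * s) - v x)

/-- The density `|Δu|² + |∇u|² + (1 + λa)u²`. -/
def eDensity [Group G] (S : Finset G) (a : G → ℝ) (lam : ℝ) (u : G → ℝ) (x : G) : ℝ :=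
  (lap S u x) ^ 2 + grad S u u x + (1 + lam * a x) * (u x) ^ 2

/-- Membership in the space `E_λ`. -/
def MemE [Group G] (S : Finset G) (a : G → ℝ) (lam : ℝ) (u : G → ℝ) : Prop :=
  Summable (eDensity S a lam u)

/-- `‖u‖²_{E_λ}`. -/
def normEsq [Group G] (S : Finset G) (a : G → ℝ) (lam : ℝ) (u : G → ℝ) : ℝ :=
  ∑' x, eDensity S a lam u x

/-- `‖u‖_{E_λ}`. -/
def normE [Group G] (S : Finset G) (a : G → ℝ) (lam : ℝ) (u : G → ℝ) : ℝ :=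
  Real.sqrt (normEsq S a lam u)

/-- The inner product `⟨u, v⟩_{E_λ}`. -/
def innerE [Group G] (S : Finset G) (a : G → ℝ) (lam : ℝ) (u v : G → ℝ) : ℝ :=
  ∑' x, (lap S u x * lap S v x + grad S u v x + (1 + lam * a x) * (u x * v x))

/-- The nonlocal term `Σ_G (R_α ∗ |u|^p)|u|^p`. -/
def Dterm [DecidableEq G] (R : G → G → ℝ) (p : ℝ) (u : G → ℝ) : ℝ :=
  ∑' x, conv R (fun y => |u y| ^ p) x * |u x| ^ p

/-- The nonlocal pairing `Σ_G (R_α ∗ |u|^p)|u|^{p-2} u v`. -/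
def Kterm [DecidableEq G] (R : G → G → ℝ) (p : ℝ) (u v : G → ℝ) : ℝ :=
  ∑' x, conv R (fun y => |u y| ^ p) x * (|u x| ^ (p - 2) * u x * v x)

/-- The energy functional `J_λ`. -/
def Jfun [Group G] [DecidableEq G] (S : Finset G) (a : G → ℝ) (lam : ℝ)
    (R : G → G → ℝ) (p : ℝ) (u : G → ℝ) : ℝ :=
  (1 / 2) * normEsq S a lam u - (1 / (2 * p)) * Dterm R p u

/-- The derivative pairing `(J'_λ(u), v)`. -/
def Jd [Group G] [DecidableEq G] (S : Finset G) (a : G → ℝ) (lam : ℝ)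
    (R : G → G → ℝ) (p : ℝ) (u v : G → ℝ) : ℝ :=
  innerE S a lam u v - Kterm R p u v

/-- The Nehari manifold `N_λ`. -/
def nehari [Group G] [DecidableEq G] (S : Finset G) (a : G → ℝ) (lam : ℝ)
    (R : G → G → ℝ) (p : ℝ) : Set (G → ℝ) :=
  {u | MemE S a lam u ∧ u ≠ 0 ∧ Jd S a lam R p u u = 0}

/-- `m_λ = inf_{N_λ} J_λ`. -/
def mlam [Group G] [DecidableEq G] (S : Finset G) (a : G → ℝ) (lam : ℝ)
    (R : G → G → ℝ) (p : ℝ) : ℝ :=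
  sInf (Jfun S a lam R p '' nehari S a lam R p)

/-- The norm of `J'_λ(u)` in the dual space `E_λ*`. -/
def dualNorm [Group G] [DecidableEq G] (S : Finset G) (a : G → ℝ) (lam : ℝ)
    (R : G → G → ℝ) (p : ℝ) (u : G → ℝ) : ℝ :=
  sSup {t : ℝ | ∃ v, MemE S a lam v ∧ normEsq S a lam v ≤ 1 ∧ t = |Jd S a lam R p u v|}

/-- `(PS)_c` sequence for `J_λ`. -/
def PSseq [Group G] [DecidableEq G] (S : Finset G) (a : G → ℝ) (lam : ℝ)
    (R : G → G → ℝ) (p : ℝ) (c : ℝ) (U : ℕ → G → ℝ) : Prop :=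
  (∀ n, MemE S a lam (U n)) ∧
  Tendsto (fun n => Jfun S a lam R p (U n)) atTop (nhds c) ∧
  Tendsto (fun n => dualNorm S a lam R p (U n)) atTop (nhds 0)

/-- The Cayley graph of `(G, S)`. -/
def cayley [Group G] (S : Finset G) : SimpleGraph G :=
  SimpleGraph.fromRel (fun x y => x⁻¹ * y ∈ S)

/-- Condition (A₁): the potential well `Ω = {a = 0}` is nonempty, finite and connected. -/
def CondA1 [Group G] (S : Finset G) (a : G → ℝ) : Prop :=
  {x | a x = 0}.Nonempty ∧ {x | a x = 0}.Finite ∧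
  ((cayley S).induce {x | a x = 0}).Connected

/-- Condition (A₂): some sublevel set `{a ≤ M}` is finite and nonempty. -/
def CondA2 (a : G → ℝ) : Prop :=
  ∃ M : ℝ, 0 < M ∧ {x | a x ≤ M}.Finite ∧ {x | a x ≤ M}.Nonempty

/-- The density `|Δu|² + |∇u|² + u²` of the `W^{2,2}` norm. -/
def wDensity [Group G] (S : Finset G) (u : G → ℝ) (x : G) : ℝ :=
  (lap S u x) ^ 2 + grad S u u x + (u x) ^ 2

/-- Membership in `W^{2,2}(G)`. -/
def MemW [Group G] (S : Finset G) (u : G → ℝ) : Prop := Summable (wDensity S u)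

/-- `‖u‖²_{W^{2,2}}`. -/
def normWsq [Group G] (S : Finset G) (u : G → ℝ) : ℝ := ∑' x, wDensity S u x

/-- Membership in `E(Ω)`: vanishing outside `Ω`. -/
def MemEOm (Ω : Set G) (u : G → ℝ) : Prop := ∀ x ∉ Ω, u x = 0

/-- `‖u‖²_{E(Ω)}`. -/
def normOmSq [Group G] (S : Finset G) (Ω : Set G) (u : G → ℝ) : ℝ :=
  (∑' x, ((lap S u x) ^ 2 + grad S u u x)) + ∑' x : Ω, (u (x : G)) ^ 2

/-- The nonlocal term over `Ω`. -/
def DtermOm [DecidableEq G] (Ω : Set G) (R : G → G → ℝ) (p : ℝ) (u : G → ℝ) : ℝ :=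
  ∑' x : Ω, conv R (fun y => |u y| ^ p) (x : G) * |u (x : G)| ^ p

/-- The limiting energy functional `J_Ω`. -/
def JOm [Group G] [DecidableEq G] (S : Finset G) (Ω : Set G) (R : G → G → ℝ) (p : ℝ)
    (u : G → ℝ) : ℝ :=
  (1 / 2) * normOmSq S Ω u - (1 / (2 * p)) * DtermOm Ω R p u

/-- The derivative pairing `(J'_Ω(u), v)`. -/
def JdOm [Group G] [DecidableEq G] (S : Finset G) (Ω : Set G) (R : G → G → ℝ) (p : ℝ)
    (u v : G → ℝ) : ℝ :=
  (∑' x, (lap S u x * lap S v x + grad S u v x)) + (∑' x : Ω, u (x : G) * v (x : G))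
    - ∑' x : Ω, conv R (fun y => |u y| ^ p) (x : G) * (|u (x : G)| ^ (p - 2) * u (x : G) * v (x : G))

/-- The Nehari manifold `N_Ω`. -/
def nehariOm [Group G] [DecidableEq G] (S : Finset G) (Ω : Set G) (R : G → G → ℝ)
    (p : ℝ) : Set (G → ℝ) :=
  {u | MemEOm Ω u ∧ u ≠ 0 ∧ JdOm S Ω R p u u = 0}

/-- `m_Ω = inf_{N_Ω} J_Ω`. -/
def mOm [Group G] [DecidableEq G] (S : Finset G) (Ω : Set G) (R : G → G → ℝ) (p : ℝ) : ℝ :=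
  sInf (JOm S Ω R p '' nehariOm S Ω R p)

/-!
Write `J (t u) = t² / 2 * ‖u‖² - t ^ (2 p) / (2 p) * D u`, where `D` is the nonlocal term. If
`D ≤ C ‖·‖ ^ (2 p)`, then `2 p > 2` makes the quadratic part dominate on small spheres and, as soon
as `D u > 0`, the nonlocal part dominate far out on the ray through `u`.

The bound on `D` replaces the Hardy–Littlewood–Sobolev inequality, which is not needed since `p` is
strictly above the critical exponent. For `∑ u² ≤ 1`, so `|u| ≤ 1`, choose `θ ∈ (0, 1]` with
`2 - p ≤ θ` and `β := (N - α) / θ > N`, and set `K := d ^ (-β)`, so that `R ≲ K ^ θ`. By AM-GM,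
`K ^ θ |u x| ^ p |u y| ^ p ≤ u(x)² u(y)² + K (u(x)² + u(y)²)`, and the row and column sums of `K`
are finite because of the polynomial growth. The general case follows by homogeneity.
-/

section KernelEstimates

variable {ι : Type*}

lemma ofReal_tsum_le_tsum_ofReal {f : ι → ℝ} (hf : ∀ i, 0 ≤ f i) :
    ENNReal.ofReal (∑' i, f i) ≤ ∑' i, ENNReal.ofReal (f i) := by
  by_cases h : Summable f
  · exact (ENNReal.ofReal_tsum_of_nonneg hf h).le
  · simp [tsum_eq_zero_of_not_summable h]

lemma rpow_mul_rpow_mul_rpow_le {K a b θ p : ℝ} (hK : 0 ≤ K) (ha : 0 ≤ a) (ha1 : a ≤ 1)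
    (hb : 0 ≤ b) (hb1 : b ≤ 1) (hθ : 0 ≤ θ) (hθ1 : θ ≤ 1) (hp : 2 - θ ≤ p) :
    K ^ θ * (a ^ p * b ^ p) ≤ a ^ 2 * b ^ 2 + K * (a ^ 2 + b ^ 2) := by
  have hab : 0 ≤ a * b := mul_nonneg ha hb
  have amgm : ((a * b) ^ 2) ^ (1 - θ) * (K * (a * b)) ^ θ
      ≤ (1 - θ) * (a * b) ^ 2 + θ * (K * (a * b)) :=
    Real.geom_mean_le_arith_mean2_weighted (by linarith) hθ (by positivity) (by positivity)
      (by ring)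
  have hsplit : (a * b) ^ (2 - θ) = ((a * b) ^ 2) ^ (1 - θ) * (a * b) ^ θ := by
    rw [← Real.rpow_natCast_mul hab, ← Real.rpow_add_of_nonneg hab (by push_cast; linarith) hθ]
    push_cast
    ring_nf
  calc K ^ θ * (a ^ p * b ^ p)
      = K ^ θ * (a * b) ^ p := by rw [Real.mul_rpow ha hb]
    _ ≤ K ^ θ * (a * b) ^ (2 - θ) := by
        gcongr K ^ θ * ?_
        exact Real.rpow_le_rpow_of_exponent_ge' hab (mul_le_one₀ ha1 hb hb1) (by linarith) hp
    _ = ((a * b) ^ 2) ^ (1 - θ) * (K * (a * b)) ^ θ := by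
        rw [hsplit, Real.mul_rpow hK hab]
        ring
    _ ≤ (1 - θ) * (a * b) ^ 2 + θ * (K * (a * b)) := amgm
    _ ≤ 1 * (a * b) ^ 2 + 1 * (K * (a ^ 2 + b ^ 2)) := by
        gcongr
        · linarith
        · nlinarith [sq_nonneg (a - b)]
    _ = a ^ 2 * b ^ 2 + K * (a ^ 2 + b ^ 2) := by ring

lemma ofReal_mul_abs_rpow_mul_abs_rpow_le {r c K a b θ p : ℝ} (hc : 0 ≤ c) (hK : 0 ≤ K)
    (hr : r ≤ c * K ^ θ) (ha : |a| ≤ 1) (hb : |b| ≤ 1) (hθ : 0 ≤ θ) (hθ1 : θ ≤ 1)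
    (hp : 2 - θ ≤ p) :
    ENNReal.ofReal (r * |b| ^ p) * ENNReal.ofReal (|a| ^ p) ≤
      ENNReal.ofReal c * (ENNReal.ofReal (a ^ 2) * ENNReal.ofReal (b ^ 2) +
        ENNReal.ofReal K * (ENNReal.ofReal (a ^ 2) + ENNReal.ofReal (b ^ 2))) := by
  have hreal : r * |b| ^ p * |a| ^ p ≤ c * (a ^ 2 * b ^ 2 + K * (a ^ 2 + b ^ 2)) :=
    calc r * |b| ^ p * |a| ^ p
        ≤ c * K ^ θ * |b| ^ p * |a| ^ p := by gcongr
      _ = c * (K ^ θ * (|a| ^ p * |b| ^ p)) := by ring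
      _ ≤ c * (|a| ^ 2 * |b| ^ 2 + K * (|a| ^ 2 + |b| ^ 2)) := by
          gcongr
          exact rpow_mul_rpow_mul_rpow_le hK (abs_nonneg a) ha (abs_nonneg b) hb hθ hθ1 hp
      _ = c * (a ^ 2 * b ^ 2 + K * (a ^ 2 + b ^ 2)) := by simp only [sq_abs]
  rw [← ENNReal.ofReal_mul' (by positivity), ← ENNReal.ofReal_add, ← ENNReal.ofReal_mul,
    ← ENNReal.ofReal_mul, ← ENNReal.ofReal_add, ← ENNReal.ofReal_mul]
  · exact ENNReal.ofReal_le_ofReal hreal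
  all_goals positivity

lemma tsum_tsum_mul_add_le {K : ι → ι → ℝ≥0∞} {U : ι → ℝ≥0∞} {M : ℝ≥0∞}
    (hrow : ∀ x, ∑' y, K x y ≤ M) (hcol : ∀ y, ∑' x, K x y ≤ M) (hU : ∑' x, U x ≤ 1) :
    ∑' x, ∑' y, (U x * U y + K x y * (U x + U y)) ≤ 1 + (M + M) := by
  have hUU : ∑' x, ∑' y, U x * U y ≤ 1 := by
    simp_rw [ENNReal.tsum_mul_left, ENNReal.tsum_mul_right]
    exact mul_le_one' hU hU
  have schur {k : ι → ι → ℝ≥0∞} (hk : ∀ x, ∑' y, k x y ≤ M) : ∑' x, ∑' y, k x y * U x ≤ M :=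
    calc ∑' x, ∑' y, k x y * U x
        = ∑' x, (∑' y, k x y) * U x := by simp_rw [ENNReal.tsum_mul_right]
      _ ≤ ∑' x, M * U x := by gcongr with x; exact hk x
      _ = M * ∑' x, U x := ENNReal.tsum_mul_left
      _ ≤ M := mul_le_of_le_one_right' hU
  have hcol' : ∑' x, ∑' y, K x y * U y ≤ M := ENNReal.tsum_comm.trans_le (schur hcol)
  simp_rw [mul_add, ENNReal.tsum_add]
  exact add_le_add hUU (add_le_add (schur hrow) hcol')

lemma rpow_neg_le_tsum_dyadic {β : ℝ} (hβ : 0 < β) (m : ℕ) :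
    ENNReal.ofReal ((m : ℝ) ^ (-β)) ≤
      ∑' k : ℕ, {n : ℕ | n ≤ 2 ^ k}.indicator
        (fun _ ↦ ENNReal.ofReal (((2 : ℝ) ^ k / 2) ^ (-β))) m := by
  rcases Nat.eq_zero_or_pos m with rfl | hm
  · simp [Real.zero_rpow (neg_ne_zero.2 hβ.ne')]
  have hupper : m ∈ {n : ℕ | n ≤ 2 ^ (Nat.log 2 m + 1)} :=
    (Nat.lt_pow_succ_log_self one_lt_two m).le
  have hlower : (2 : ℝ) ^ (Nat.log 2 m + 1) / 2 ≤ m := by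
    rw [pow_succ, mul_div_cancel_right₀ _ two_ne_zero]
    exact_mod_cast Nat.pow_log_le_self 2 hm.ne'
  refine le_trans ?_ (ENNReal.le_tsum (Nat.log 2 m + 1))
  rw [Set.indicator_of_mem hupper]
  exact ENNReal.ofReal_le_ofReal
    (Real.rpow_le_rpow_of_nonpos (by positivity) hlower (neg_nonpos.2 hβ.le))

lemma tsum_rpow_neg_ne_top_of_encard_le {ℓ : ι → ℕ} {C β : ℝ} {N : ℕ} (hC : 0 ≤ C)
    (hβ : (N : ℝ) < β)
    (hcard : ∀ k : ℕ, ({i | ℓ i ≤ 2 ^ k}.encard : ℝ≥0∞) ≤ ENNReal.ofReal (C * (2 ^ k) ^ N)) :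
    ∑' i, ENNReal.ofReal ((ℓ i : ℝ) ^ (-β)) ≠ ∞ := by
  set q : ℝ := 2 ^ ((N : ℝ) - β) with hq
  have hq1 : q < 1 := Real.rpow_lt_one_of_one_lt_of_neg one_lt_two (by linarith)
  have hgeom : Summable fun k : ℕ ↦ C * 2 ^ β * q ^ k :=
    (summable_geometric_of_lt_one (by positivity) hq1).mul_left _
  have hterm (k : ℕ) : C * (2 ^ k) ^ N * ((2 : ℝ) ^ k / 2) ^ (-β) = C * 2 ^ β * q ^ k := by
    have hqk : q ^ k = ((2 : ℝ) ^ k) ^ N * ((2 : ℝ) ^ k) ^ (-β) := by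
      rw [← Real.rpow_natCast _ N, ← Real.rpow_add (by positivity), ← sub_eq_add_neg, hq,
        Real.rpow_pow_comm zero_le_two]
    rw [hqk, Real.div_rpow (by positivity) zero_le_two, Real.rpow_neg zero_le_two, div_inv_eq_mul]
    ring
  refine ne_top_of_le_ne_top hgeom.tsum_ofReal_ne_top ?_
  calc ∑' i, ENNReal.ofReal ((ℓ i : ℝ) ^ (-β))
      ≤ ∑' i, ∑' k : ℕ, {n : ℕ | n ≤ 2 ^ k}.indicator
          (fun _ ↦ ENNReal.ofReal (((2 : ℝ) ^ k / 2) ^ (-β))) (ℓ i) :=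
        ENNReal.tsum_le_tsum fun i ↦
          rpow_neg_le_tsum_dyadic (N.cast_nonneg.trans_lt hβ) (ℓ i)
    _ = ∑' k : ℕ, ({i | ℓ i ≤ 2 ^ k}.encard : ℝ≥0∞) *
          ENNReal.ofReal (((2 : ℝ) ^ k / 2) ^ (-β)) := by
        rw [ENNReal.tsum_comm]
        refine tsum_congr fun k ↦ ?_
        rw [← ENNReal.tsum_set_const,
          tsum_subtype {i | ℓ i ≤ 2 ^ k} fun _ ↦ ENNReal.ofReal (((2 : ℝ) ^ k / 2) ^ (-β))]
        rfl
    _ ≤ ∑' k : ℕ, ENNReal.ofReal (C * 2 ^ β * q ^ k) := by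
        refine ENNReal.tsum_le_tsum fun k ↦ ?_
        grw [hcard k]
        rw [← ENNReal.ofReal_mul (by positivity), hterm]

end KernelEstimates

section WordMetric

variable [Group G] {S : Finset G} {N : ℕ}

lemma wordDist_mul_left (g x y : G) : wordDist S (g * x) (g * y) = wordDist S x y := by
  simp only [wordDist, mul_inv_rev, mul_assoc, inv_mul_cancel_left]

lemma wordDist_eq_wordDist_one (x y : G) : wordDist S x y = wordDist S (y⁻¹ * x) 1 := by
  rw [← wordDist_mul_left y⁻¹ x y, inv_mul_cancel]

lemma tsum_wordDist_left (f : ℕ → ℝ≥0∞) (x : G) :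
    ∑' y, f (wordDist S x y) = ∑' h, f (wordDist S h 1) := by
  simp_rw [wordDist_eq_wordDist_one x]
  exact ((Equiv.inv G).trans (Equiv.mulRight x)).tsum_eq fun h ↦ f (wordDist S h 1)

lemma tsum_wordDist_right (f : ℕ → ℝ≥0∞) (y : G) :
    ∑' x, f (wordDist S x y) = ∑' h, f (wordDist S h 1) := by
  simp_rw [fun x ↦ wordDist_eq_wordDist_one (S := S) x y]
  exact (Equiv.mulLeft y⁻¹).tsum_eq fun h ↦ f (wordDist S h 1)

lemma PolyGrowth.tsum_wordDist_rpow_neg_ne_top (hgrowth : PolyGrowth S N) {β : ℝ}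
    (hβ : (N : ℝ) < β) : ∑' h : G, ENNReal.ofReal ((wordDist S h 1 : ℝ) ^ (-β)) ≠ ∞ := by
  obtain ⟨C₁, C₂, hC₁, hC₂, hball⟩ := hgrowth
  refine tsum_rpow_neg_ne_top_of_encard_le hC₂.le hβ fun k ↦ ?_
  obtain ⟨hlower, hupper⟩ := hball (2 ^ k) (one_le_pow₀ one_le_two)
  -- `ncard` vanishes on infinite sets, so the lower growth bound makes the ball finite.
  have hfin : (ball S (1 : G) (2 ^ k)).Finite := by
    refine Set.finite_of_ncard_pos ?_
    exact_mod_cast lt_of_lt_of_le (by positivity : (0 : ℝ) < C₁ * (2 ^ k) ^ N) hlower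
  have hset : {h : G | wordDist S h 1 ≤ 2 ^ k} = ball S (1 : G) (2 ^ k) := by
    ext h
    simp only [ball, Set.mem_ofPred_eq]
    exact_mod_cast Iff.rfl
  rw [hset, ← hfin.cast_ncard_eq, ENat.toENNReal_coe, ← ENNReal.ofReal_natCast]
  exact ENNReal.ofReal_le_ofReal hupper

lemma PolyGrowth.infinite (hgrowth : PolyGrowth S N) (hN : N ≠ 0) : Infinite G := by
  obtain ⟨C₁, C₂, hC₁, -, hball⟩ := hgrowth
  by_contra hfinite
  have : Finite G := not_infinite_iff_finite.1 hfinite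
  have hlim : Tendsto (fun r : ℝ ↦ C₁ * r ^ N) atTop atTop :=
    (tendsto_pow_atTop hN).const_mul_atTop hC₁
  obtain ⟨r, hlarge, hr⟩ :=
    ((hlim.eventually_gt_atTop (Nat.card G : ℝ)).and (eventually_ge_atTop 1)).exists
  have hcard : ((ball S (1 : G) r).ncard : ℝ) ≤ Nat.card G := by
    exact_mod_cast Set.ncard_le_card _
  exact absurd (hball r hr).1 (hcard.trans_lt hlarge).not_ge

end WordMetric

section NonlocalTerm

variable [DecidableEq G] {R : G → G → ℝ} {p : ℝ} {u : G → ℝ}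

lemma conv_summand_nonneg (hR : ∀ x y, x ≠ y → 0 ≤ R x y) {f : G → ℝ} (hf : ∀ y, 0 ≤ f y)
    (x y : G) : 0 ≤ if y = x then 0 else R x y * f y := by
  split_ifs with hyx
  · exact le_rfl
  · exact mul_nonneg (hR x y (Ne.symm hyx)) (hf y)

lemma conv_nonneg (hR : ∀ x y, x ≠ y → 0 ≤ R x y) {f : G → ℝ} (hf : ∀ y, 0 ≤ f y) (x : G) :
    0 ≤ conv R f x :=
  tsum_nonneg (conv_summand_nonneg hR hf x)

lemma ofReal_conv_le_convE (hR : ∀ x y, x ≠ y → 0 ≤ R x y) {f : G → ℝ} (hf : ∀ y, 0 ≤ f y)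
    (x : G) : ENNReal.ofReal (conv R f x) ≤ convE R f x := by
  refine (ofReal_tsum_le_tsum_ofReal (conv_summand_nonneg hR hf x)).trans_eq
    (tsum_congr fun y ↦ ?_)
  split_ifs <;> simp

lemma ofReal_Dterm_le_tsum (hR : ∀ x y, x ≠ y → 0 ≤ R x y) :
    ENNReal.ofReal (Dterm R p u) ≤
      ∑' x, convE R (fun y ↦ |u y| ^ p) x * ENNReal.ofReal (|u x| ^ p) := by
  have hconv := conv_nonneg hR (f := fun y ↦ |u y| ^ p) fun y ↦ by positivity
  refine (ofReal_tsum_le_tsum_ofReal fun x ↦ mul_nonneg (hconv x) (by positivity)).trans ?_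
  gcongr with x
  rw [ENNReal.ofReal_mul (hconv x)]
  gcongr
  exact ofReal_conv_le_convE hR (fun y ↦ by positivity) x

lemma Dterm_smul (t : ℝ) : Dterm R p (t • u) = |t| ^ (2 * p) * Dterm R p u := by
  have hpow (x : G) : |(t • u) x| ^ p = |t| ^ p * |u x| ^ p := by
    rw [Pi.smul_apply, smul_eq_mul, abs_mul, Real.mul_rpow (abs_nonneg _) (abs_nonneg _)]
  have hconv (x : G) :
      conv R (fun y ↦ |(t • u) y| ^ p) x = |t| ^ p * conv R (fun y ↦ |u y| ^ p) x := by
    simp only [conv, hpow, ← tsum_mul_left, mul_ite, mul_zero, mul_left_comm]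
  have hsq : |t| ^ (2 * p) = |t| ^ p * |t| ^ p := by
    rw [mul_comm, ← Nat.cast_two, Real.rpow_mul_natCast (abs_nonneg _), sq]
  rw [Dterm, Dterm, ← tsum_mul_left]
  refine tsum_congr fun x ↦ ?_
  rw [hconv, hpow, hsq]
  ring

lemma Dterm_zero (hp : p ≠ 0) : Dterm R p 0 = 0 := by
  simp [Dterm, Real.zero_rpow hp]

lemma Dterm_pos (hR : ∀ x y, x ≠ y → 0 < R x y) (hp : p ≠ 0) (hfin : u.support.Finite)
    (hnt : u.support.Nontrivial) : 0 < Dterm R p u := by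
  obtain ⟨x, hx, y, hy, hxy⟩ := hnt
  have hR0 (x y : G) (h : x ≠ y) : 0 ≤ R x y := (hR x y h).le
  have hpow_pos {z : G} (hz : z ∈ u.support) : 0 < |u z| ^ p :=
    Real.rpow_pos_of_pos (abs_pos.2 hz) p
  have hpow_zero {z : G} (hz : z ∉ u.support) : |u z| ^ p = 0 := by
    rw [Function.notMem_support.1 hz, abs_zero, Real.zero_rpow hp]
  have hconv_pos : 0 < conv R (fun z ↦ |u z| ^ p) x := by
    refine Summable.tsum_pos ?_ (conv_summand_nonneg hR0 (fun z ↦ by positivity) x) y ?_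
    · exact summable_of_ne_finset_zero (s := hfin.toFinset) fun z hz ↦ by
        simp [hpow_zero (mt hfin.mem_toFinset.2 hz)]
    · rw [if_neg hxy.symm]
      exact mul_pos (hR x y hxy) (hpow_pos hy)
  refine Summable.tsum_pos ?_ (fun z ↦ ?_) x (mul_pos hconv_pos (hpow_pos hx))
  · exact summable_of_ne_finset_zero (s := hfin.toFinset) fun z hz ↦ by
      simp [hpow_zero (mt hfin.mem_toFinset.2 hz)]
  · exact mul_nonneg (conv_nonneg hR0 (fun y ↦ by positivity) z) (by positivity)

lemma Dterm_le_of_tsum_sq_le_one {K : G → G → ℝ} {c θ : ℝ} {M : NNReal} (hc : 0 ≤ c)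
    (hθ : 0 ≤ θ) (hθ1 : θ ≤ 1) (hp : 2 - θ ≤ p) (hR : ∀ x y, x ≠ y → 0 ≤ R x y)
    (hK : ∀ x y, 0 ≤ K x y) (hRK : ∀ x y, x ≠ y → R x y ≤ c * K x y ^ θ)
    (hrow : ∀ x, ∑' y, ENNReal.ofReal (K x y) ≤ M)
    (hcol : ∀ y, ∑' x, ENNReal.ofReal (K x y) ≤ M)
    (hu : Summable fun x ↦ u x ^ 2) (hu1 : ∑' x, u x ^ 2 ≤ 1) :
    Dterm R p u ≤ c * (1 + (M + M)) := by
  have habs (x : G) : |u x| ≤ 1 :=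
    abs_le_one_iff_mul_self_le_one.2 <| by
      rw [← sq]
      exact (hu.le_tsum x fun _ _ ↦ sq_nonneg _).trans hu1
  set U : G → ℝ≥0∞ := fun x ↦ ENNReal.ofReal (u x ^ 2)
  have hU : ∑' x, U x ≤ 1 := by
    rw [← ENNReal.ofReal_tsum_of_nonneg (fun x ↦ sq_nonneg _) hu]
    exact ENNReal.ofReal_le_one.2 hu1
  have hterm (x y : G) :
      (if y = x then 0 else ENNReal.ofReal (R x y * |u y| ^ p)) * ENNReal.ofReal (|u x| ^ p) ≤
        ENNReal.ofReal c * (U x * U y + ENNReal.ofReal (K x y) * (U x + U y)) := by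
    split_ifs with hyx
    · simp
    exact ofReal_mul_abs_rpow_mul_abs_rpow_le hc (hK x y) (hRK x y (Ne.symm hyx)) (habs x)
      (habs y) hθ hθ1 hp
  have hENN : ENNReal.ofReal (Dterm R p u) ≤ ENNReal.ofReal (c * (1 + (M + M))) :=
    calc ENNReal.ofReal (Dterm R p u)
        ≤ ∑' x, ∑' y, (if y = x then 0 else ENNReal.ofReal (R x y * |u y| ^ p)) *
            ENNReal.ofReal (|u x| ^ p) := by
          simp_rw [ENNReal.tsum_mul_right]
          exact ofReal_Dterm_le_tsum hR
      _ ≤ ∑' x, ∑' y, ENNReal.ofReal c * (U x * U y + ENNReal.ofReal (K x y) * (U x + U y)) :=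
          ENNReal.tsum_le_tsum fun x ↦ ENNReal.tsum_le_tsum (hterm x)
      _ ≤ ENNReal.ofReal c * (1 + (M + M)) := by
          simp_rw [ENNReal.tsum_mul_left (a := ENNReal.ofReal c)]
          gcongr
          exact tsum_tsum_mul_add_le hrow hcol hU
      _ = ENNReal.ofReal (c * (1 + (M + M))) := by
          rw [ENNReal.ofReal_mul hc, ENNReal.ofReal_add zero_le_one (by positivity),
            ENNReal.ofReal_add M.coe_nonneg M.coe_nonneg, ENNReal.ofReal_one,
            ENNReal.ofReal_coe_nnreal]
  exact (ENNReal.ofReal_le_ofReal_iff (by positivity)).1 hENN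

lemma Dterm_le_mul_tsum_sq_rpow (hp : p ≠ 0) {C : ℝ}
    (hC : ∀ v : G → ℝ, Summable (fun x ↦ v x ^ 2) → ∑' x, v x ^ 2 ≤ 1 → Dterm R p v ≤ C)
    (hu : Summable fun x ↦ u x ^ 2) : Dterm R p u ≤ C * (∑' x, u x ^ 2) ^ p := by
  set T := ∑' x, u x ^ 2 with hT
  have hT0 : 0 ≤ T := tsum_nonneg fun x ↦ sq_nonneg _
  rcases hT0.eq_or_lt with hzero | hpos
  · have hu0 : u = 0 := by
      have hsum : HasSum (fun x ↦ u x ^ 2) 0 := hzero ▸ hu.hasSum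
      exact funext fun x ↦ pow_eq_zero_iff two_ne_zero |>.1
        (congr_fun ((hasSum_zero_iff_of_nonneg fun x ↦ sq_nonneg (u x)).1 hsum) x)
    rw [hu0, Dterm_zero hp, ← hzero, Real.zero_rpow hp, mul_zero]
  · set v : G → ℝ := (√T)⁻¹ • u with hv
    have hv_sq : (fun x ↦ v x ^ 2) = fun x ↦ T⁻¹ * u x ^ 2 := by
      funext x
      rw [hv, Pi.smul_apply, smul_eq_mul, mul_pow, inv_pow, Real.sq_sqrt hT0]
    have hDv : Dterm R p v ≤ C := by
      refine hC v (hv_sq ▸ hu.mul_left _) ?_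
      rw [hv_sq, tsum_mul_left, ← hT, inv_mul_cancel₀ hpos.ne']
    have huv : u = √T • v := (smul_inv_smul₀ (Real.sqrt_pos.2 hpos).ne' u).symm
    have hpow : |√T| ^ (2 * p) = T ^ p := by
      rw [abs_of_nonneg (Real.sqrt_nonneg T), Real.rpow_mul (Real.sqrt_nonneg T), Real.rpow_two,
        Real.sq_sqrt hT0]
    rw [huv, Dterm_smul, hpow, mul_comm]
    gcongr

end NonlocalTerm

lemma exists_interpolation_exponent {N α p : ℝ} (hN : 0 < N) (hα : α < N) (hp1 : 1 < p)
    (hp : (N + α) / N < p) : ∃ θ : ℝ, 0 < θ ∧ θ ≤ 1 ∧ 2 - p ≤ θ ∧ N < (N - α) / θ := by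
  rw [div_lt_iff₀ hN] at hp
  obtain ⟨θ, hlower, hupper⟩ : ∃ θ, max (2 - p) 0 < θ ∧ θ < min 1 ((N - α) / N) := by
    refine exists_between (max_lt (lt_min (by linarith) ?_) (lt_min one_pos ?_))
    · rw [lt_div_iff₀ hN]
      linarith
    · exact div_pos (sub_pos.2 hα) hN
  obtain ⟨hpθ, hθ⟩ := max_lt_iff.1 hlower
  obtain ⟨hθ1, hθN⟩ := lt_min_iff.1 hupper
  exact ⟨θ, hθ, hθ1.le, hpθ.le, (lt_div_comm₀ hθ hN).1 hθN⟩

theorem exists_Dterm_le_mul_tsum_sq_rpow [Group G] [DecidableEq G] {S : Finset G} {N : ℕ}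
    (hN : N ≠ 0) (hgrowth : PolyGrowth S N) {α : ℝ} (hα : α < N) {R : G → G → ℝ}
    (hR : RieszKernel S N α R) {p : ℝ} (hp1 : 1 < p) (hp : ((N : ℝ) + α) / N < p) :
    ∃ C : ℝ, 0 ≤ C ∧ ∀ u : G → ℝ, Summable (fun x ↦ u x ^ 2) →
      Dterm R p u ≤ C * (∑' x, u x ^ 2) ^ p := by
  obtain ⟨hRpos, c₁, c₂, -, hc₂, hRiesz⟩ := hR
  obtain ⟨θ, hθ, hθ1, hpθ, hβ⟩ :=
    exists_interpolation_exponent (by positivity : (0 : ℝ) < N) hα hp1 hp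
  set β : ℝ := (N - α) / θ with hβdef
  obtain ⟨M, hM⟩ := WithTop.ne_top_iff_exists.1 (hgrowth.tsum_wordDist_rpow_neg_ne_top hβ)
  have hRK (x y : G) (hxy : x ≠ y) : R x y ≤ c₂ * ((wordDist S x y : ℝ) ^ (-β)) ^ θ := by
    rw [← Real.rpow_mul (Nat.cast_nonneg _), hβdef, neg_mul, div_mul_cancel₀ _ hθ.ne', neg_sub]
    exact (hRiesz x y hxy).2
  refine ⟨c₂ * (1 + (M + M)), by positivity, fun u hu ↦
    Dterm_le_mul_tsum_sq_rpow (by linarith) (fun v hv hv1 ↦ ?_) hu⟩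
  exact Dterm_le_of_tsum_sq_le_one hc₂.le hθ.le hθ1 (by linarith) (fun x y _ ↦ (hRpos x y).le)
    (fun x y ↦ by positivity) hRK
    (fun x ↦ (tsum_wordDist_left (fun n ↦ ENNReal.ofReal ((n : ℝ) ^ (-β))) x).trans_le hM.ge)
    (fun y ↦ (tsum_wordDist_right (fun n ↦ ENNReal.ofReal ((n : ℝ) ^ (-β))) y).trans_le hM.ge)
    hv hv1

section EnergySpace

variable [Group G] {S : Finset G} {a : G → ℝ} {lam : ℝ} {u : G → ℝ}

lemma grad_self_nonneg (x : G) : 0 ≤ grad S u u x :=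
  mul_nonneg one_half_pos.le (Finset.sum_nonneg fun _ _ ↦ mul_self_nonneg _)

lemma sq_le_eDensity (ha : ∀ x, 0 ≤ lam * a x) (x : G) : u x ^ 2 ≤ eDensity S a lam u x := by
  have hpotential : 0 ≤ lam * a x * u x ^ 2 := mul_nonneg (ha x) (sq_nonneg _)
  rw [eDensity]
  linarith [sq_nonneg (lap S u x), grad_self_nonneg (S := S) (u := u) x]

lemma normE_nonneg (u : G → ℝ) : 0 ≤ normE S a lam u := Real.sqrt_nonneg _

lemma normE_sq (ha : ∀ x, 0 ≤ lam * a x) : normE S a lam u ^ 2 = normEsq S a lam u :=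
  Real.sq_sqrt (tsum_nonneg fun x ↦ (sq_nonneg _).trans (sq_le_eDensity ha x))

lemma MemE.summable_sq (hu : MemE S a lam u) (ha : ∀ x, 0 ≤ lam * a x) :
    Summable fun x ↦ u x ^ 2 :=
  hu.of_nonneg_of_le (fun _ ↦ sq_nonneg _) (sq_le_eDensity ha)

lemma MemE.tsum_sq_le_normE_sq (hu : MemE S a lam u) (ha : ∀ x, 0 ≤ lam * a x) :
    ∑' x, u x ^ 2 ≤ normE S a lam u ^ 2 :=
  ((hu.summable_sq ha).tsum_le_tsum (sq_le_eDensity ha) hu).trans_eq (normE_sq ha).symm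

lemma MemE.normE_pos (hu : MemE S a lam u) (ha : ∀ x, 0 ≤ lam * a x) (hu0 : u ≠ 0) :
    0 < normE S a lam u := by
  obtain ⟨x, hx⟩ := Function.ne_iff.1 hu0
  have hsum : 0 < ∑' x, u x ^ 2 :=
    (hu.summable_sq ha).tsum_pos (fun _ ↦ sq_nonneg _) x (sq_pos_of_ne_zero hx)
  exact lt_of_pow_lt_pow_left₀ 2 (normE_nonneg u) (by
    rw [zero_pow two_ne_zero]
    exact hsum.trans_le (hu.tsum_sq_le_normE_sq ha))

lemma lap_smul (t : ℝ) (x : G) : lap S (t • u) x = t * lap S u x := by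
  simp only [lap, Pi.smul_apply, smul_eq_mul, Finset.mul_sum, mul_sub]

lemma grad_smul_smul (t : ℝ) (x : G) : grad S (t • u) (t • u) x = t ^ 2 * grad S u u x := by
  simp only [grad, Pi.smul_apply, smul_eq_mul, Finset.mul_sum]
  exact Finset.sum_congr rfl fun s _ ↦ by ring

lemma eDensity_smul (t : ℝ) :
    eDensity S a lam (t • u) = fun x ↦ t ^ 2 * eDensity S a lam u x := by
  funext x
  simp only [eDensity, lap_smul, grad_smul_smul, Pi.smul_apply, smul_eq_mul]
  ring

lemma MemE.smul (hu : MemE S a lam u) (t : ℝ) : MemE S a lam (t • u) := by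
  rw [MemE, eDensity_smul]
  exact hu.mul_left _

lemma normEsq_smul (t : ℝ) : normEsq S a lam (t • u) = t ^ 2 * normEsq S a lam u := by
  rw [normEsq, eDensity_smul, tsum_mul_left, normEsq]

lemma normE_smul (t : ℝ) : normE S a lam (t • u) = |t| * normE S a lam u := by
  rw [normE, normEsq_smul, Real.sqrt_mul (sq_nonneg t), Real.sqrt_sq_eq_abs, normE]

lemma memE_of_finite_support (hu : u.support.Finite) : MemE S a lam u := by
  have hfin : (u.support ∪ ⋃ s ∈ S, (· * s) ⁻¹' u.support).Finite :=
    hu.union <| S.finite_toSet.biUnion fun s _ ↦ hu.preimage (mul_left_injective s).injOn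
  refine summable_of_hasFiniteSupport (hfin.subset fun x ↦ ?_)
  contrapose!
  intro hx
  simp only [Set.mem_union, Set.mem_iUnion, Set.mem_preimage, Function.mem_support, not_or,
    not_exists, not_not] at hx
  obtain ⟨hux, hus⟩ := hx
  have hdiff (s : G) (hs : s ∈ S) : u (x * s) - u x = 0 := by rw [hus s hs, hux, sub_zero]
  have hlap : lap S u x = 0 := Finset.sum_eq_zero hdiff
  have hgrad : grad S u u x = 0 := by
    rw [grad, Finset.sum_eq_zero fun s hs ↦ by rw [hdiff s hs, mul_zero], mul_zero]
  simp [eDensity, hux, hlap, hgrad]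

end EnergySpace

lemma exists_Dterm_le_mul_normE_rpow [Group G] [DecidableEq G] {S : Finset G} {N : ℕ}
    (hN : N ≠ 0) (hgrowth : PolyGrowth S N) {α : ℝ} (hα : α < N) {R : G → G → ℝ}
    (hR : RieszKernel S N α R) {p : ℝ} (hp1 : 1 < p) (hp : ((N : ℝ) + α) / N < p)
    {a : G → ℝ} {lam : ℝ} (ha : ∀ x, 0 ≤ lam * a x) :
    ∃ C : ℝ, ∀ u, MemE S a lam u → Dterm R p u ≤ C * normE S a lam u ^ (2 * p) := by
  obtain ⟨C, hC0, hC⟩ := exists_Dterm_le_mul_tsum_sq_rpow hN hgrowth hα hR hp1 hp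
  refine ⟨C, fun u hu ↦ (hC u (hu.summable_sq ha)).trans ?_⟩
  rw [Real.rpow_mul (normE_nonneg u), Real.rpow_two]
  gcongr
  exact hu.tsum_sq_le_normE_sq ha

lemma exists_finite_nontrivial_support (ι : Type*) [Nontrivial ι] :
    ∃ v : ι → ℝ, v.support.Finite ∧ v.support.Nontrivial := by
  obtain ⟨x, y, hxy⟩ := exists_pair_ne ι
  have hsupp : (Set.indicator {x, y} (1 : ι → ℝ)).support = {x, y} := by simp
  exact ⟨Set.indicator {x, y} 1, by rw [hsupp]; exact Set.toFinite _,
    by rw [hsupp]; exact Set.nontrivial_pair hxy⟩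

section Geometry

variable [Group G] [DecidableEq G] {S : Finset G} {a : G → ℝ} {lam : ℝ} {R : G → G → ℝ} {p : ℝ}

lemma exists_forall_normE_eq_le_Jfun (ha : ∀ x, 0 ≤ lam * a x) (hp : 1 < p) {C : ℝ}
    (hD : ∀ u, MemE S a lam u → Dterm R p u ≤ C * normE S a lam u ^ (2 * p)) :
    ∃ ρ > 0, ∀ u, MemE S a lam u → normE S a lam u = ρ → ρ ^ 2 / 4 ≤ Jfun S a lam R p u := by
  have hlim : Tendsto (fun ρ : ℝ ↦ C * ρ ^ (2 * p - 2)) (nhdsWithin 0 (Set.Ioi 0)) (nhds 0) := by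
    have hcont : ContinuousAt (fun ρ : ℝ ↦ C * ρ ^ (2 * p - 2)) 0 :=
      (Real.continuousAt_rpow_const _ _ (.inr (by linarith))).const_mul C
    simpa [Real.zero_rpow (by linarith : 2 * p - 2 ≠ 0)] using
      hcont.tendsto.mono_left nhdsWithin_le_nhds
  obtain ⟨ρ, hsmall, hρ⟩ :=
    ((hlim.eventually_lt_const (by linarith : 0 < p / 2)).and self_mem_nhdsWithin).exists
  refine ⟨ρ, hρ, fun u hu hnorm ↦ ?_⟩
  have hDu : Dterm R p u ≤ p / 2 * ρ ^ 2 :=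
    calc Dterm R p u
        ≤ C * ρ ^ (2 * p) := hnorm ▸ hD u hu
      _ = C * ρ ^ (2 * p - 2) * ρ ^ 2 := by
          rw [mul_assoc, ← Real.rpow_two, ← Real.rpow_add hρ, sub_add_cancel]
      _ ≤ p / 2 * ρ ^ 2 := by gcongr
  calc ρ ^ 2 / 4
      = 1 / 2 * ρ ^ 2 - 1 / (2 * p) * (p / 2 * ρ ^ 2) := by field_simp; norm_num
    _ ≤ 1 / 2 * normEsq S a lam u - 1 / (2 * p) * Dterm R p u := by
        rw [← normE_sq ha, hnorm]
        gcongr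

lemma tendsto_Jfun_smul_atBot (hp : 1 < p) {u : G → ℝ} (hD : 0 < Dterm R p u) :
    Tendsto (fun t : ℝ ↦ Jfun S a lam R p (t • u)) atTop atBot := by
  set A := 1 / 2 * normEsq S a lam u
  set B := 1 / (2 * p) * Dterm R p u
  have hBpos : 0 < B := by positivity
  have hfactor : Tendsto (fun t : ℝ ↦ A - B * t ^ (2 * p - 2)) atTop atBot :=
    tendsto_atBot_add_const_left _ A <| tendsto_neg_atTop_atBot.comp <|
      (tendsto_rpow_atTop (by linarith)).const_mul_atTop hBpos
  refine ((tendsto_pow_atTop two_ne_zero).atTop_mul_atBot₀ hfactor).congr' ?_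
  filter_upwards [eventually_gt_atTop 0] with t ht
  have hpow : t ^ (2 * p) = t ^ 2 * t ^ (2 * p - 2) := by
    rw [← Real.rpow_two, ← Real.rpow_add ht, add_sub_cancel]
  rw [Jfun, normEsq_smul, Dterm_smul, abs_of_pos ht, hpow]
  ring

lemma exists_normE_gt_Jfun_neg (ha : ∀ x, 0 ≤ lam * a x) (hp : 1 < p) {u : G → ℝ}
    (hu : MemE S a lam u) (hu0 : u ≠ 0) (hD : 0 < Dterm R p u) (ρ : ℝ) :
    ∃ w, MemE S a lam w ∧ ρ < normE S a lam w ∧ Jfun S a lam R p w < 0 := by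
  have hnorm : Tendsto (fun t : ℝ ↦ normE S a lam (t • u)) atTop atTop := by
    simp_rw [normE_smul]
    exact tendsto_abs_atTop_atTop.atTop_mul_const (hu.normE_pos ha hu0)
  obtain ⟨t, hρ, hJ⟩ := ((hnorm.eventually_gt_atTop ρ).and
    ((tendsto_Jfun_smul_atBot hp hD).eventually_lt_atBot 0)).exists
  exact ⟨t • u, hu.smul t, hρ, hJ⟩

end Geometry

theorem mountain_pass_geometry_general [Group G] [DecidableEq G] {S : Finset G} {N : ℕ}
    (hN : N ≠ 0) (hgrowth : PolyGrowth S N) {α : ℝ} (hα : α < N) {R : G → G → ℝ}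
    (hR : RieszKernel S N α R) {p : ℝ} (hp1 : 1 < p) (hp : ((N : ℝ) + α) / N < p)
    {a : G → ℝ} {lam : ℝ} (ha : ∀ x, 0 ≤ lam * a x) :
    ∃ θ ρ : ℝ, 0 < θ ∧ 0 < ρ ∧
      (∀ u : G → ℝ, MemE S a lam u → normE S a lam u = ρ → θ ≤ Jfun S a lam R p u) ∧
      ∃ w : G → ℝ, MemE S a lam w ∧ ρ < normE S a lam w ∧ Jfun S a lam R p w < 0 := by
  obtain ⟨C, hC⟩ := exists_Dterm_le_mul_normE_rpow hN hgrowth hα hR hp1 hp ha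
  obtain ⟨ρ, hρ, hsphere⟩ := exists_forall_normE_eq_le_Jfun ha hp1 hC
  have : Infinite G := hgrowth.infinite hN
  obtain ⟨v, hfin, hnt⟩ := exists_finite_nontrivial_support G
  exact ⟨ρ ^ 2 / 4, ρ, by positivity, hρ, hsphere,
    exists_normE_gt_Jfun_neg ha hp1 (memE_of_finite_support hfin)
      (Function.support_nonempty_iff.1 hnt.nonempty)
      (Dterm_pos (fun x y _ ↦ hR.1 x y) (by linarith) hfin hnt) ρ⟩

theorem mountain_pass_geometry
    {G : Type*} [Group G] [Countable G] [DecidableEq G]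
    (S : Finset G) (hSsymm : ∀ s ∈ S, s⁻¹ ∈ S)
    (hSgen : Subgroup.closure (S : Set G) = ⊤)
    (N : ℕ) (hN : 2 ≤ N) (hgrowth : PolyGrowth S N)
    (α : ℝ) (hα0 : 0 < α) (hαN : α < (N : ℝ))
    (R : G → G → ℝ) (hR : RieszKernel S N α R)
    (p : ℝ) (hp : ((N : ℝ) + α) / (N : ℝ) < p)
    (a : G → ℝ) (ha : ∀ x, 0 ≤ a x)
    (lam : ℝ) (hlam : 0 < lam) :
    ∃ θ ρ : ℝ, 0 < θ ∧ 0 < ρ ∧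
      (∀ u : G → ℝ, MemE S a lam u → normE S a lam u = ρ → θ ≤ Jfun S a lam R p u) ∧
      ∃ w : G → ℝ, MemE S a lam w ∧ ρ < normE S a lam w ∧ Jfun S a lam R p w < 0 := by
  have hp1 : 1 < p := lt_of_le_of_lt (by rw [le_div_iff₀ (by positivity)]; linarith) hp
  exact mountain_pass_geometry_general (by omega) hgrowth hαN hR hp1 hp
    fun x ↦ mul_nonneg hlam.le (ha x)

end Choquard
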